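/- Let U ⊆ ℝ² be open, Ω : U → ℝ continuous, and C₀, C₁, C real constants. Suppose h, h̃ : U → ℝ are twice differentiable and satisfy Δ₀h + 2Ω(−C₀ + C₁·exp h) = 0 and Δ₀h̃ + 2(exp h)·Ω(−C₁ + C·exp h̃) = 0 on U. Then Δ₀(h + h̃) + 2Ω(−C₀ + C·exp(h + h̃)) = 0 on U. (Superposition of a vortex of type (C, C₁) on the rescaled background e^hΩ with a vortex of type (C₁, C₀) produces a vortex of type (C, C₀).) -/

import Mathlib

/-- The flat Laplacian `Δ₀ = ∂²/∂x² + ∂²/∂y²` on `ℝ²`. -/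
noncomputable def lap2 (f : ℝ × ℝ → ℝ) (p : ℝ × ℝ) : ℝ :=
  fderiv ℝ (fun q => fderiv ℝ f q (1, 0)) p (1, 0) +
  fderiv ℝ (fun q => fderiv ℝ f q (0, 1)) p (0, 1)

open scoped Topology

section SecondDerivative

variable {𝕜 E F : Type*} [NontriviallyNormedField 𝕜]
  [NormedAddCommGroup E] [NormedSpace 𝕜 E] [NormedAddCommGroup F] [NormedSpace 𝕜 F]

theorem differentiableOn_fderiv_of_contDiffOn_two {f : E → F} {U : Set E} (hU : IsOpen U)
    (hf : ContDiffOn 𝕜 2 f U) : DifferentiableOn 𝕜 (fderiv 𝕜 f) U :=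
  (hf.fderiv_of_isOpen hU one_add_one_eq_two.le).differentiableOn one_ne_zero

theorem fderiv_fderiv_apply_add {f g : E → F} {p v : E}
    (hf : ∀ᶠ q in 𝓝 p, DifferentiableAt 𝕜 f q) (hg : ∀ᶠ q in 𝓝 p, DifferentiableAt 𝕜 g q)
    (hf' : DifferentiableAt 𝕜 (fun q => fderiv 𝕜 f q v) p)
    (hg' : DifferentiableAt 𝕜 (fun q => fderiv 𝕜 g q v) p) :
    fderiv 𝕜 (fun q => fderiv 𝕜 (f + g) q v) p =
      fderiv 𝕜 (fun q => fderiv 𝕜 f q v) p + fderiv 𝕜 (fun q => fderiv 𝕜 g q v) p := by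
  have first_order : (fun q => fderiv 𝕜 (f + g) q v) =ᶠ[𝓝 p]
      (fun q => fderiv 𝕜 f q v) + fun q => fderiv 𝕜 g q v := by
    filter_upwards [hf, hg] with q hfq hgq
    simp only [fderiv_add hfq hgq, add_apply, Pi.add_apply]
  rw [first_order.fderiv_eq, fderiv_add hf' hg']

end SecondDerivative

theorem lap2_add {f g : ℝ × ℝ → ℝ} {p : ℝ × ℝ}
    (hf : ∀ᶠ q in 𝓝 p, DifferentiableAt ℝ f q) (hg : ∀ᶠ q in 𝓝 p, DifferentiableAt ℝ g q)
    (hf' : DifferentiableAt ℝ (fderiv ℝ f) p) (hg' : DifferentiableAt ℝ (fderiv ℝ g) p) :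
    lap2 (f + g) p = lap2 f p + lap2 g p := by
  have second_order (v : ℝ × ℝ) :
      fderiv ℝ (fun q => fderiv ℝ (f + g) q v) p =
        fderiv ℝ (fun q => fderiv ℝ f q v) p + fderiv ℝ (fun q => fderiv ℝ g q v) p :=
    fderiv_fderiv_apply_add hf hg
      (hf'.clm_apply (differentiableAt_const v)) (hg'.clm_apply (differentiableAt_const v))
  simp only [lap2, second_order, add_apply]
  exact add_add_add_comm _ _ _ _

/-- The equation `Δ₀h + 2Ω(−C₀ + C·e^h) = 0` of a vortex field `h` of type `(C, C₀)` on the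
background `Ω`, at the points of `U`. Since `lap2` takes junk values where `h` is not twice
differentiable, regularity of `h` is to be assumed separately. -/
def IsVortexField (C C₀ : ℝ) (Ω : ℝ × ℝ → ℝ) (U : Set (ℝ × ℝ)) (h : ℝ × ℝ → ℝ) : Prop :=
  ∀ p ∈ U, lap2 h p + 2 * Ω p * (-C₀ + C * Real.exp (h p)) = 0

theorem vortex_superposition_general {U : Set (ℝ × ℝ)} (hU : IsOpen U)
    {Ω : ℝ × ℝ → ℝ} {C₀ C₁ C : ℝ} {h htil : ℝ × ℝ → ℝ}
    (hh : DifferentiableOn ℝ h U) (hh' : DifferentiableOn ℝ (fderiv ℝ h) U)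
    (hhtil : DifferentiableOn ℝ htil U) (hhtil' : DifferentiableOn ℝ (fderiv ℝ htil) U)
    (h_vortex : IsVortexField C₁ C₀ Ω U h)
    (htil_vortex : IsVortexField C C₁ (fun p => Real.exp (h p) * Ω p) U htil) :
    IsVortexField C C₀ Ω U (h + htil) := by
  intro p hp
  have hUp : U ∈ 𝓝 p := hU.mem_nhds hp
  rw [lap2_add (hh.eventually_differentiableAt hUp) (hhtil.eventually_differentiableAt hUp)
    (hh'.differentiableAt hUp) (hhtil'.differentiableAt hUp), Pi.add_apply, Real.exp_add]
  -- The terms `± 2 * C₁ * exp h * Ω` of the two equations cancel.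
  linear_combination h_vortex p hp + htil_vortex p hp

/-- Superposition of a vortex of type `(C, C₁)` on the rescaled background `e^h Ω`
with a vortex of type `(C₁, C₀)` produces a vortex of type `(C, C₀)`. -/
theorem vortex_superposition
    (U : Set (ℝ × ℝ)) (hU : IsOpen U)
    (Ω : ℝ × ℝ → ℝ) (hΩ : ContinuousOn Ω U)
    (C₀ C₁ C : ℝ)
    (h htil : ℝ × ℝ → ℝ)
    (hh : ContDiffOn ℝ 2 h U) (hhtil : ContDiffOn ℝ 2 htil U)
    (heq1 : ∀ p ∈ U, lap2 h p + 2 * Ω p * (-C₀ + C₁ * Real.exp (h p)) = 0)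
    (heq2 : ∀ p ∈ U,
      lap2 htil p + 2 * Real.exp (h p) * Ω p * (-C₁ + C * Real.exp (htil p)) = 0) :
    ∀ p ∈ U,
      lap2 (fun q => h q + htil q) p
        + 2 * Ω p * (-C₀ + C * Real.exp (h p + htil p)) = 0 :=
  vortex_superposition_general hU (hh.differentiableOn two_ne_zero)
    (differentiableOn_fderiv_of_contDiffOn_two hU hh) (hhtil.differentiableOn two_ne_zero)
    (differentiableOn_fderiv_of_contDiffOn_two hU hhtil) heq1
    (by simpa only [IsVortexField, mul_assoc] using heq2)
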